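/- Let X be a proper geodesic metric space and p ∈ X. If inj(p) < conj(X) or MinRad(p) < conj(X), then inj(p) ≤ MinRad(p). -/

import Mathlib

open Set Metric Topology Filter
open scoped ENNReal

noncomputable section

namespace InjSoul

/-- The unit interval `[0,1] ⊆ ℝ`. -/
abbrev I01 : Set ℝ := Set.Icc (0 : ℝ) 1

variable {X : Type*} [MetricSpace X]

/-- `0` as a point of `[0,1]`. -/
def pt0 : I01 := ⟨0, by norm_num⟩

/-- `1` as a point of `[0,1]`. -/
def pt1 : I01 := ⟨1, by norm_num⟩

/-- `c : [0,1] → X` is a geodesic of speed (= length) `L`. -/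
def IsGeod (c : C(I01, X)) (L : ℝ) : Prop :=
  0 ≤ L ∧ ∀ s t : I01, dist (c s) (c t) = L * |(s : ℝ) - (t : ℝ)|

/-- `γ : [0,1] → X` is a local geodesic of speed (= length) `L`. -/
def IsLocGeod (γ : C(I01, X)) (L : ℝ) : Prop :=
  0 ≤ L ∧ ∀ t : I01, ∃ ε > 0, ∀ s s' : I01,
    |(s : ℝ) - (t : ℝ)| < ε → |(s' : ℝ) - (t : ℝ)| < ε →
      dist (γ s) (γ s') = L * |(s : ℝ) - (s' : ℝ)|

/-- `X` is a geodesic space: any two points are joined by a geodesic. -/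
def GeodesicSpace (X : Type*) [MetricSpace X] : Prop :=
  ∀ x y : X, ∃ (c : C(I01, X)) (L : ℝ), IsGeod c L ∧ c pt0 = x ∧ c pt1 = y

/-- The cut locus of `p`: all points joined to `p` by at least two distinct geodesics. -/
def Cut (p : X) : Set X :=
  {q | ∃ (γ σ : C(I01, X)) (Lγ Lσ : ℝ), IsGeod γ Lγ ∧ IsGeod σ Lσ ∧
    γ pt0 = p ∧ γ pt1 = q ∧ σ pt0 = p ∧ σ pt1 = q ∧ γ ≠ σ}

/-- The injectivity radius of `p`, an element of `[0,∞]` (`∞` if `Cut p = ∅`). -/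
def inj (p : X) : ℝ≥0∞ := ⨅ q ∈ Cut p, edist p q

/-- The minimal cut locus of `p`: points `γ t₀`, `t₀ ∈ (0,1)`, on a nontrivial local geodesic
`γ` issuing in `p` such that `γ` is minimizing on `[0,t₀]` but on no larger interval `[0,t]`. -/
def MinCut (p : X) : Set X :=
  {q | ∃ (γ : C(I01, X)) (L : ℝ) (t₀ : ℝ) (ht₀ : t₀ ∈ Set.Ioo (0 : ℝ) 1),
      IsLocGeod γ L ∧ 0 < L ∧ γ pt0 = p ∧ γ ⟨t₀, Set.mem_Icc_of_Ioo ht₀⟩ = q ∧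
      dist p q = L * t₀ ∧
      ∀ t : ℝ, ∀ ht : t ∈ Set.Ioc t₀ 1,
        dist p (γ ⟨t, ⟨(ht₀.1.trans ht.1).le, ht.2⟩⟩) ≠ L * t}

/-- The minimal radius of `p`, an element of `[0,∞]` (`∞` if `MinCut p = ∅`). -/
def minRad (p : X) : ℝ≥0∞ := ⨅ q ∈ MinCut p, edist p q

/-- The space `X̃_p` of local geodesics issuing in `p` (including the constant map), viewed
as a subset of the continuous maps `C([0,1], X)` whose metric is the uniform metric `ρ`. -/
def LocGeodFrom (p : X) : Set C(I01, X) := {γ | (∃ L, IsLocGeod γ L) ∧ γ pt0 = p}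

/-- The endpoint map `exp_p : X̃_p → X`, `γ ↦ γ 1`. -/
def endpt : C(I01, X) → X := fun γ => γ pt1

/-- `γ 1` is conjugate to `p = γ 0` along the local geodesic `γ`: no neighborhood `U` of `γ`
in `X̃_p` is mapped homeomorphically onto its image by the endpoint map. -/
def ConjugateAlong (p : X) (γ : C(I01, X)) : Prop :=
  γ ∈ LocGeodFrom p ∧
    ¬ ∃ U : Set C(I01, X), U ⊆ LocGeodFrom p ∧ U ∈ 𝓝[LocGeodFrom p] γ ∧
      Topology.IsEmbedding (U.restrict endpt)

/-- The conjugate radius of `p`: the infimum of lengths of local geodesics issuing in `p`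
along which the endpoint is conjugate to `p` (`∞` if there are none). -/
def conjRad (p : X) : ℝ≥0∞ :=
  sInf {l | ∃ (γ : C(I01, X)) (L : ℝ), IsLocGeod γ L ∧ γ pt0 = p ∧
    ConjugateAlong p γ ∧ l = ENNReal.ofReal L}

/-- The conjugate radius of the space `X`. -/
def conjSpace (X : Type*) [MetricSpace X] : ℝ≥0∞ := ⨅ p : X, conjRad p

/-! Let `γ` be a local geodesic from `p` that minimizes up to `γ τ`, and suppose that `γ τ` is
neither a cut point nor conjugate to `p` along `γ|[0,τ]`. As `t → τ`, geodesics from `p` to `γ t`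
subconverge to a geodesic from `p` to `γ τ` by Arzelà–Ascoli, hence converge to `γ|[0,τ]`, the only
such geodesic. The segments `γ|[0,t]` also converge to `γ|[0,τ]` and have the same endpoints, so
local injectivity of the endpoint map identifies the two: `γ` minimizes slightly beyond `τ`. A
minimal cut point off the cut locus is therefore conjugate to `p` along a minimizing geodesic. -/

theorem dist_le_mul_sub_of_frequently_dist_le {Y : Type*} [PseudoMetricSpace Y] {g : ℝ → Y}
    {a b L : ℝ} (hab : a ≤ b) (hg : ContinuousOn g (Icc a b))
    (hloc : ∀ x ∈ Ico a b, ∃ᶠ y in 𝓝[>] x, dist (g x) (g y) ≤ L * (y - x)) :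
    dist (g a) (g b) ≤ L * (b - a) := by
  have hderiv : ∀ x, HasDerivAt (fun x => L * (x - a)) L x := fun x => by
    simpa using ((hasDerivAt_id x).sub_const a).const_mul L
  refine image_le_of_liminf_slope_right_le_deriv_boundary (f := fun x => dist (g a) (g x))
    (B := fun x => L * (x - a)) (B' := fun _ => L) (by fun_prop) (by simp)
    (by fun_prop) (fun x _ => (hderiv x).hasDerivWithinAt) (fun x hx r hr => ?_) ⟨hab, le_rfl⟩
  refine ((hloc x hx).and_eventually self_mem_nhdsWithin).mono fun y ⟨hy, hxy⟩ => ?_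
  replace hxy : x < y := hxy
  refine lt_of_le_of_lt ?_ hr
  rw [slope_def_field, div_le_iff₀ (sub_pos.2 hxy)]
  calc dist (g a) (g y) - dist (g a) (g x) ≤ dist (g x) (g y) :=
        sub_le_iff_le_add'.2 (dist_triangle _ _ _)
    _ ≤ L * (y - x) := hy

theorem isCompact_setOf_lipschitzWith_apply_eq {α Y : Type*} [PseudoMetricSpace α] [CompactSpace α]
    [MetricSpace Y] [ProperSpace Y] (K : NNReal) (a : α) (p : Y) :
    IsCompact {f : C(α, Y) | LipschitzWith K f ∧ f a = p} := by
  apply ArzelaAscoli.isCompact_of_equicontinuous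
  · have himage : ContinuousMap.toFun '' {f : C(α, Y) | LipschitzWith K f ∧ f a = p} =
        {f : α → Y | LipschitzWith K f} ∩ {f | f a = p} := by
      ext f
      exact ⟨by rintro ⟨f, hf, rfl⟩; exact hf, fun hf => ⟨⟨f, hf.1.continuous⟩, hf, rfl⟩⟩
    rw [himage]
    have hclosed : IsClosed ({f : α → Y | LipschitzWith K f} ∩ {f | f a = p}) :=
      (isClosed_setOfPred_lipschitzWith K).inter (isClosed_eq (by fun_prop) (by fun_prop))
    refine (isCompact_univ_pi fun x => isCompact_closedBall p (K * dist x a)).of_isClosed_subset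
      hclosed ?_
    rintro f ⟨hlip, hfa⟩ x -
    rw [mem_closedBall, ← show f a = p from hfa]
    exact hlip.dist_le_mul x a
  · exact (LipschitzWith.uniformEquicontinuous _ K fun f => f.2.1).equicontinuous

theorem IsGeod.isLocGeod {c : C(I01, X)} {L : ℝ} (hc : IsGeod c L) : IsLocGeod c L :=
  ⟨hc.1, fun _ => ⟨1, one_pos, fun s s' _ _ => hc.2 s s'⟩⟩

theorem IsGeod.dist_eq {c : C(I01, X)} {L : ℝ} (hc : IsGeod c L) : dist (c pt0) (c pt1) = L := by
  simp [hc.2, pt0, pt1]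

theorem IsGeod.lipschitzWith {c : C(I01, X)} {L : ℝ} (hc : IsGeod c L) :
    LipschitzWith L.toNNReal c :=
  LipschitzWith.of_dist_le_mul fun s t => by
    rw [hc.2, Real.coe_toNNReal _ hc.1, Subtype.dist_eq, Real.dist_eq]

theorem exists_isGeod_iff {c : C(I01, X)} :
    (∃ L, IsGeod c L) ↔
      ∀ s t : I01, dist (c s) (c t) = dist (c pt0) (c pt1) * |(s : ℝ) - (t : ℝ)| := by
  refine ⟨?_, fun hc => ⟨_, dist_nonneg, hc⟩⟩
  rintro ⟨L, hc⟩
  rw [hc.dist_eq]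
  exact hc.2

theorem isClosed_setOf_exists_isGeod : IsClosed {c : C(I01, X) | ∃ L, IsGeod c L} := by
  simp only [exists_isGeod_iff, ofPred_forall]
  exact isClosed_iInter fun s => isClosed_iInter fun t =>
    isClosed_eq (by fun_prop) (by fun_prop)

theorem isCompact_setOf_exists_isGeod_dist_le [ProperSpace X] (p : X) (R : ℝ) :
    IsCompact {c : C(I01, X) | (∃ L, IsGeod c L) ∧ c pt0 = p ∧ dist p (c pt1) ≤ R} := by
  refine (isCompact_setOf_lipschitzWith_apply_eq R.toNNReal pt0 p).of_isClosed_subset ?_ ?_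
  · have hclosed0 : IsClosed {c : C(I01, X) | c pt0 = p} := isClosed_eq (by fun_prop) (by fun_prop)
    have hclosed1 : IsClosed {c : C(I01, X) | dist p (c pt1) ≤ R} :=
      isClosed_le (by fun_prop) (by fun_prop)
    exact isClosed_setOf_exists_isGeod.inter (hclosed0.inter hclosed1)
  · rintro c ⟨⟨L, hc⟩, rfl, hR⟩
    rw [hc.dist_eq] at hR
    exact ⟨hc.lipschitzWith.weaken (Real.toNNReal_le_toNNReal hR), rfl⟩

theorem tendsto_of_isGeod_of_notMem_cut [ProperSpace X] {p : X} {σ : C(I01, X)} {ℓ : ℝ}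
    (hσ : IsGeod σ ℓ) (hσ0 : σ pt0 = p) (hcut : σ pt1 ∉ Cut p)
    {ι : Type*} {l : Filter ι} {c : ι → C(I01, X)} (hc : ∀ i, ∃ L, IsGeod (c i) L)
    (hc0 : ∀ i, c i pt0 = p) (hc1 : Tendsto (fun i => c i pt1) l (𝓝 (σ pt1))) :
    Tendsto c l (𝓝 σ) := by
  have hbound : ∀ᶠ i in l, dist p (c i pt1) ≤ dist p (σ pt1) + 1 :=
    (tendsto_const_nhds.dist hc1).eventually_le_const (lt_add_one _)
  refine (isCompact_setOf_exists_isGeod_dist_le p _).tendsto_nhds_of_unique_mapClusterPt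
    (hbound.mono fun i hi => ⟨hc i, hc0 i, hi⟩) ?_
  rintro c' ⟨⟨L, hc'⟩, hc'0, -⟩ hcluster
  have hcluster1 : MapClusterPt (c' pt1) l (fun i => c i pt1) :=
    hcluster.continuousAt_comp (continuous_eval_const pt1).continuousAt
  have hc'1 : c' pt1 = σ pt1 := eq_of_nhds_neBot (hcluster1.neBot.mono (inf_le_inf_left _ hc1))
  by_contra hne
  exact hcut ⟨c', σ, L, ℓ, hc', hσ, hc'0, hc'1, hσ0, rfl, hne⟩

theorem IsLocGeod.eventually_dist_eq {γ : C(I01, X)} {L : ℝ} (hγ : IsLocGeod γ L) (t : I01) :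
    ∀ᶠ s in 𝓝 t, dist (γ t) (γ s) = L * dist t s := by
  obtain ⟨ε, hε, hdist⟩ := hγ.2 t
  filter_upwards [ball_mem_nhds t hε] with s hs
  exact hdist t s (by simpa using hε) hs

theorem IsLocGeod.length_unique {γ : C(I01, X)} {L M : ℝ} (hL : IsLocGeod γ L)
    (hM : IsLocGeod γ M) : L = M := by
  have : (𝓝[>] pt0).NeBot := nhdsGT_neBot_of_exists_gt ⟨pt1, zero_lt_one (α := I01)⟩
  have hspeeds : ∀ᶠ s in 𝓝[>] pt0, L * dist pt0 s = M * dist pt0 s := by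
    filter_upwards [nhdsWithin_le_nhds (hL.eventually_dist_eq pt0),
      nhdsWithin_le_nhds (hM.eventually_dist_eq pt0)] with s hsL hsM
    rw [← hsL, hsM]
  obtain ⟨s, hs, hpos⟩ := (hspeeds.and self_mem_nhdsWithin).exists
  exact mul_right_cancel₀ (dist_pos.2 (ne_of_lt hpos)).ne' hs

theorem IsLocGeod.dist_le_of_le {γ : C(I01, X)} {L : ℝ} (hγ : IsLocGeod γ L) {s t : I01}
    (hst : s ≤ t) : dist (γ s) (γ t) ≤ L * ((t : ℝ) - s) := by
  let proj : ℝ → I01 := projIcc 0 1 zero_le_one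
  have hproj : Continuous proj := continuous_projIcc
  have hloc : ∀ x : ℝ, ∀ᶠ y in 𝓝[>] x, dist (γ (proj x)) (γ (proj y)) ≤ L * (y - x) := fun x => by
    filter_upwards [nhdsWithin_le_nhds ((hproj.tendsto x).eventually (hγ.eventually_dist_eq _)),
      self_mem_nhdsWithin] with y hy hxy
    calc dist (γ (proj x)) (γ (proj y)) = L * dist (proj x) (proj y) := hy
      _ ≤ L * dist x y := by
          gcongr
          · exact hγ.1
          · simpa using (LipschitzWith.projIcc zero_le_one).dist_le_mul x y
      _ = L * (y - x) := by
          rw [dist_comm, Real.dist_eq, abs_of_pos (sub_pos.2 hxy)]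
  simpa [proj] using dist_le_mul_sub_of_frequently_dist_le (g := γ ∘ proj) hst
    (γ.continuous.comp hproj).continuousOn fun x _ => (hloc x).frequently

theorem IsLocGeod.isGeod_of_dist_eq {γ : C(I01, X)} {L : ℝ} (hγ : IsLocGeod γ L)
    (hdist : dist (γ pt0) (γ pt1) = L) : IsGeod γ L := by
  have dist_eq_of_le : ∀ s t : I01, s ≤ t → dist (γ s) (γ t) = L * |(s : ℝ) - t| := by
    intro s t hst
    have h0s := hγ.dist_le_of_le (s := pt0) (t := s) s.2.1
    have ht1 := hγ.dist_le_of_le (s := t) (t := pt1) t.2.2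
    have htriangle := dist_triangle4 (γ pt0) (γ s) (γ t) (γ pt1)
    rw [abs_sub_comm, abs_of_nonneg (sub_nonneg.2 (Subtype.coe_le_coe.2 hst))]
    refine (hγ.dist_le_of_le hst).antisymm ?_
    simp only [pt0, pt1] at h0s ht1 htriangle hdist
    linarith
  refine ⟨hγ.1, fun s t => ?_⟩
  rcases le_total s t with hst | hts
  · exact dist_eq_of_le s t hst
  · rw [dist_comm, abs_sub_comm, dist_eq_of_le t s hts]

/-- The initial segment `γ|[0,τ]`, reparametrized to `[0,1]`, as a continuous function of `τ` with
values in the paths under the uniform metric. -/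
def initialSegment (γ : C(I01, X)) : C(I01, C(I01, X)) :=
  (γ.comp ⟨fun q : I01 × I01 => q.1 * q.2, continuous_mul⟩).curry

theorem initialSegment_apply (γ : C(I01, X)) (τ s : I01) : initialSegment γ τ s = γ (τ * s) :=
  rfl

theorem initialSegment_pt0 (γ : C(I01, X)) (τ : I01) : initialSegment γ τ pt0 = γ pt0 :=
  congrArg γ (mul_zero τ)

theorem initialSegment_pt1 (γ : C(I01, X)) (τ : I01) : initialSegment γ τ pt1 = γ τ :=
  congrArg γ (mul_one τ)

theorem IsLocGeod.isLocGeod_initialSegment {γ : C(I01, X)} {L : ℝ} (hγ : IsLocGeod γ L) (τ : I01) :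
    IsLocGeod (initialSegment γ τ) (L * τ) := by
  refine ⟨mul_nonneg hγ.1 τ.2.1, fun t => ?_⟩
  obtain ⟨ε, hε, hdist⟩ := hγ.2 (τ * t)
  have abs_mul_sub_mul (a b : I01) :
      |((τ * a : I01) : ℝ) - ((τ * b : I01) : ℝ)| = τ * |(a : ℝ) - b| := by
    rw [Icc.coe_mul, Icc.coe_mul, ← mul_sub, abs_mul, abs_of_nonneg τ.2.1]
  have mul_near (s : I01) (hs : |(s : ℝ) - t| < ε) :
      |((τ * s : I01) : ℝ) - ((τ * t : I01) : ℝ)| < ε :=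
    (abs_mul_sub_mul s t).trans_lt
      ((mul_le_of_le_one_left (abs_nonneg _) τ.2.2).trans_lt hs)
  refine ⟨ε, hε, fun s s' hs hs' => ?_⟩
  rw [initialSegment_apply, initialSegment_apply, hdist _ _ (mul_near s hs) (mul_near s' hs'),
    abs_mul_sub_mul, mul_assoc]

theorem IsLocGeod.initialSegment_mem_locGeodFrom {γ : C(I01, X)} {L : ℝ} (hγ : IsLocGeod γ L)
    (τ : I01) : initialSegment γ τ ∈ LocGeodFrom (γ pt0) :=
  ⟨⟨_, hγ.isLocGeod_initialSegment τ⟩, initialSegment_pt0 γ τ⟩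

theorem eventually_eq_of_not_conjugateAlong {p : X} {σ : C(I01, X)} (hσ : σ ∈ LocGeodFrom p)
    (hconj : ¬ ConjugateAlong p σ) {ι : Type*} {l : Filter ι} {c d : ι → C(I01, X)}
    (hc : Tendsto c l (𝓝[LocGeodFrom p] σ)) (hd : Tendsto d l (𝓝[LocGeodFrom p] σ))
    (hcd : ∀ i, c i pt1 = d i pt1) : ∀ᶠ i in l, c i = d i := by
  obtain ⟨U, -, hU, hemb⟩ := not_not.1 fun hU => hconj ⟨hσ, hU⟩
  have hinj : InjOn endpt U := injOn_iff_injective.2 hemb.injective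
  filter_upwards [hc hU, hd hU] with i hci hdi
  exact hinj hci hdi (hcd i)

theorem IsLocGeod.eventually_dist_eq_of_not_conjugateAlong [ProperSpace X] {γ : C(I01, X)} {L : ℝ}
    (hgeo : ∀ q, ∃ (c : C(I01, X)) (ℓ : ℝ), IsGeod c ℓ ∧ c pt0 = γ pt0 ∧ c pt1 = q)
    (hγ : IsLocGeod γ L) {τ : I01} (hτ : dist (γ pt0) (γ τ) = L * τ)
    (hcut : γ τ ∉ Cut (γ pt0)) (hconj : ¬ ConjugateAlong (γ pt0) (initialSegment γ τ)) :
    ∀ᶠ t : I01 in 𝓝 τ, dist (γ pt0) (γ t) = L * t := by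
  choose c ℓ hc hc0 hc1 using fun t => hgeo (γ t)
  have hmem := hγ.initialSegment_mem_locGeodFrom
  have hsegment : IsGeod (initialSegment γ τ) (L * τ) :=
    (hγ.isLocGeod_initialSegment τ).isGeod_of_dist_eq
      (by rwa [initialSegment_pt0, initialSegment_pt1])
  have hclim : Tendsto c (𝓝 τ) (𝓝 (initialSegment γ τ)) := by
    refine tendsto_of_isGeod_of_notMem_cut hsegment (initialSegment_pt0 γ τ)
      (by rwa [initialSegment_pt1]) (fun t => ⟨ℓ t, hc t⟩) hc0 ?_
    simpa only [hc1, initialSegment_pt1] using γ.continuous.tendsto τ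
  have heq : ∀ᶠ t in 𝓝 τ, c t = initialSegment γ t :=
    eventually_eq_of_not_conjugateAlong (hmem τ) hconj
      (tendsto_nhdsWithin_iff.2 ⟨hclim, .of_forall fun t => ⟨⟨ℓ t, (hc t).isLocGeod⟩, hc0 t⟩⟩)
      (tendsto_nhdsWithin_iff.2 ⟨(initialSegment γ).continuous.tendsto τ, .of_forall hmem⟩)
      fun t => by rw [hc1, initialSegment_pt1]
  filter_upwards [heq] with t ht
  calc dist (γ pt0) (γ t) = ℓ t := by rw [← (hc t).dist_eq, hc0, hc1]
    _ = L * t := (hc t).isLocGeod.length_unique (ht ▸ hγ.isLocGeod_initialSegment t)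

theorem conjRad_le_edist_of_mem_minCut_of_notMem_cut [ProperSpace X] {p q : X}
    (hgeo : ∀ y, ∃ (c : C(I01, X)) (L : ℝ), IsGeod c L ∧ c pt0 = p ∧ c pt1 = y)
    (hq : q ∈ MinCut p) (hcut : q ∉ Cut p) : conjRad p ≤ edist p q := by
  obtain ⟨γ, L, t₀, ht₀, hγ, -, rfl, rfl, hdist, hnot_min⟩ := hq
  set τ : I01 := ⟨t₀, mem_Icc_of_Ioo ht₀⟩
  have hconj : ConjugateAlong (γ pt0) (initialSegment γ τ) := by
    by_contra hconj
    have : (𝓝[>] τ).NeBot := nhdsGT_neBot_of_exists_gt ⟨pt1, ht₀.2⟩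
    have hmin := hγ.eventually_dist_eq_of_not_conjugateAlong hgeo hdist hcut hconj
    obtain ⟨t, ht, hτt⟩ :=
      ((hmin.filter_mono nhdsWithin_le_nhds).and (self_mem_nhdsWithin (s := Ioi τ))).exists
    exact hnot_min t ⟨hτt, t.2.2⟩ ht
  exact sInf_le ⟨initialSegment γ τ, L * τ, hγ.isLocGeod_initialSegment τ,
    initialSegment_pt0 γ τ, hconj, by rw [edist_dist, hdist]⟩

theorem min_inj_conjRad_le_minRad [ProperSpace X] {p : X}
    (hgeo : ∀ q, ∃ (c : C(I01, X)) (L : ℝ), IsGeod c L ∧ c pt0 = p ∧ c pt1 = q) :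
    min (inj p) (conjRad p) ≤ minRad p := by
  refine le_iInf₂ fun q hq => ?_
  by_cases hcut : q ∈ Cut p
  · exact min_le_of_left_le (iInf₂_le q hcut)
  · exact min_le_of_right_le (conjRad_le_edist_of_mem_minCut_of_notMem_cut hgeo hq hcut)

theorem inj_le_minRad_general [ProperSpace X] {p : X}
    (hgeo : ∀ q, ∃ (c : C(I01, X)) (L : ℝ), IsGeod c L ∧ c pt0 = p ∧ c pt1 = q)
    (h : inj p ≤ conjRad p ∨ minRad p < conjRad p) : inj p ≤ minRad p := by
  rcases min_le_iff.1 (min_inj_conjRad_le_minRad hgeo) with hinj | hconj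
  · exact hinj
  · exact h.elim (·.trans hconj) fun hlt => absurd hconj hlt.not_ge

/-- In a proper geodesic metric space, if `inj p < conj X` or
`MinRad p < conj X`, then `inj p ≤ MinRad p`. -/
theorem inj_le_minRad {X : Type*} [MetricSpace X] [ProperSpace X]
    (hgeo : GeodesicSpace X) (p : X)
    (h : inj p < conjSpace X ∨ minRad p < conjSpace X) :
    inj p ≤ minRad p := by
  have hle : conjSpace X ≤ conjRad p := iInf_le _ p
  exact inj_le_minRad_general (hgeo p) (h.imp (·.le.trans hle) (·.trans_le hle))

end InjSoul
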